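/- arXiv:math/0006147 — 3 statements merged into one kernel-verified Lean document; each statement's English description precedes it below -/
import Mathlib

section
/- Let U ⊆ ℂ be open, let f : U → ℂ be smooth with nowhere-vanishing Wirtinger derivative ∂f, set μ = ∂̄f/∂f, and let h : U → ℂ be smooth. Then ∂̄_μ^{(2)}({f,z} − h) = D_h μ − ∂̄h on U, i.e. ∂̄({f,z}−h) − μ·∂({f,z}−h) − 2·(∂μ)·({f,z}−h) = ∂³μ + 2h·∂μ + μ·∂h − ∂̄h. -/
/-!
Write `p = ∂f`, so that `∂̄f = μ p`, and let `N = ∂p / p` be the pre-Schwarzian. Then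
`{f,z} = ∂N − N²/2`. Since `∂` and `∂̄` commute, `∂̄p = ∂(μ p)`, and applying `∂̄` to `∂p = N p`
gives `∂̄N = ∂²μ + ∂μ · N + μ · ∂N`. Differentiating once more, `S = {f,z}` satisfies
`∂̄S = ∂(∂̄N) − N · ∂̄N = ∂³μ + 2 ∂μ · S + μ · ∂S`, and the claim follows by subtracting the
contribution of `h`.

Both Wirtinger derivatives are instances of the operator `wirt a = (∂_x + a ∂_y)/2`, so the
calculus (Leibniz rule, locality, commutation) is proved once for `wirt a`.
-/

open Complex MeasureTheory

/-- The Wirtinger derivative ∂u = (u_x − i·u_y)/2 of a function `u : ℂ → ℂ`. -/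
noncomputable def wd (u : ℂ → ℂ) : ℂ → ℂ :=
  fun z => (fderiv ℝ u z 1 - Complex.I * fderiv ℝ u z Complex.I) / 2

/-- The conjugate Wirtinger derivative ∂̄u = (u_x + i·u_y)/2. -/
noncomputable def wdbar (u : ℂ → ℂ) : ℂ → ℂ :=
  fun z => (fderiv ℝ u z 1 + Complex.I * fderiv ℝ u z Complex.I) / 2

/-- The Schwarzian derivative {f,z} = ∂³f/∂f − (3/2)·(∂²f/∂f)² of a smooth map. -/
noncomputable def schwarz (f : ℂ → ℂ) : ℂ → ℂ :=
  fun z => wd (wd (wd f)) z / wd f z - (3/2) * (wd (wd f) z / wd f z)^2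

/-- The Schwarzian derivative S(g) = g'''/g' − (3/2)·(g''/g')² of a holomorphic map. -/
noncomputable def schwarzD (g : ℂ → ℂ) : ℂ → ℂ :=
  fun z => deriv (deriv (deriv g)) z / deriv g z - (3/2) * (deriv (deriv g) z / deriv g z)^2

/-- The operator ∂̄_μ^{(k)} u = ∂̄u − μ·∂u − k·(∂μ)·u. -/
noncomputable def dbarMu (μ : ℂ → ℂ) (k : ℤ) (u : ℂ → ℂ) : ℂ → ℂ :=
  fun z => wdbar u z - μ z * wd u z - (k : ℂ) * wd μ z * u z

/-- The third-order operator D_h u = ∂³u + 2h·∂u + (∂h)·u. -/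
noncomputable def Dop (h u : ℂ → ℂ) : ℂ → ℂ :=
  fun z => wd (wd (wd u)) z + 2 * h z * wd u z + wd h z * u z

/-- The Lie derivative on weight-2 quantities: L_v q = v·∂q + 2·(∂v)·q. -/
noncomputable def lieD (v q : ℂ → ℂ) : ℂ → ℂ :=
  fun z => v z * wd q z + 2 * wd v z * q z

open scoped ContDiff

/-- The first-order operator `(∂_x + a ∂_y) / 2`; it is `∂` for `a = -i` and `∂̄` for `a = i`. -/
noncomputable def wirt (a : ℂ) (u : ℂ → ℂ) : ℂ → ℂ :=
  fun z => (fderiv ℝ u z 1 + a * fderiv ℝ u z Complex.I) / 2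

lemma wd_eq_wirt : wd = wirt (-Complex.I) := by
  funext u z
  simp only [wd, wirt]
  ring

lemma wdbar_eq_wirt : wdbar = wirt Complex.I := rfl

section Calculus

variable {U : Set ℂ} {u v : ℂ → ℂ} {z : ℂ} (a b : ℂ)

lemma differentiableAt_of_smooth (hU : IsOpen U) (hu : ContDiffOn ℝ ∞ u U) (hz : z ∈ U) :
    DifferentiableAt ℝ u z :=
  (hu.contDiffAt (hU.mem_nhds hz)).differentiableAt (by simp)

lemma smooth_fderiv (hU : IsOpen U) (hu : ContDiffOn ℝ ∞ u U) :
    ContDiffOn ℝ ∞ (fderiv ℝ u) U :=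
  hu.fderiv_of_isOpen hU (by simp)

lemma smooth_wirt (hU : IsOpen U) (hu : ContDiffOn ℝ ∞ u U) :
    ContDiffOn ℝ ∞ (wirt a u) U := by
  have h := smooth_fderiv hU hu
  have h1 : ContDiffOn ℝ ∞ (fun z => fderiv ℝ u z 1) U := h.clm_apply contDiffOn_const
  have h2 : ContDiffOn ℝ ∞ (fun z => fderiv ℝ u z Complex.I) U := h.clm_apply contDiffOn_const
  exact (h1.add (contDiffOn_const.mul h2)).div_const 2

lemma wirt_congr (hU : IsOpen U) (huv : Set.EqOn u v U) (hz : z ∈ U) :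
    wirt a u z = wirt a v z := by
  have h : u =ᶠ[nhds z] v := Filter.eventuallyEq_of_mem (hU.mem_nhds hz) huv
  simp only [wirt, h.fderiv_eq]

lemma wirt_add (hu : DifferentiableAt ℝ u z) (hv : DifferentiableAt ℝ v z) :
    wirt a (fun w => u w + v w) z = wirt a u z + wirt a v z := by
  simp only [wirt, fderiv_fun_add hu hv, add_apply]
  ring

lemma wirt_sub (hu : DifferentiableAt ℝ u z) (hv : DifferentiableAt ℝ v z) :
    wirt a (fun w => u w - v w) z = wirt a u z - wirt a v z := by
  simp only [wirt, fderiv_fun_sub hu hv, sub_apply]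
  ring

lemma wirt_mul (hu : DifferentiableAt ℝ u z) (hv : DifferentiableAt ℝ v z) :
    wirt a (fun w => u w * v w) z = wirt a u z * v z + u z * wirt a v z := by
  simp only [wirt, fderiv_fun_mul hu hv, add_apply,
    smul_apply, smul_eq_mul]
  ring

lemma wirt_const_mul (c : ℂ) (hu : DifferentiableAt ℝ u z) :
    wirt a (fun w => c * u w) z = c * wirt a u z := by
  simp only [wirt, fderiv_const_mul hu, smul_apply, smul_eq_mul]
  ring

lemma fderiv_wirt (hU : IsOpen U) (hu : ContDiffOn ℝ ∞ u U) (hz : z ∈ U) (e : ℂ) :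
    fderiv ℝ (wirt a u) z e
      = (fderiv ℝ (fderiv ℝ u) z e 1 + a * fderiv ℝ (fderiv ℝ u) z e Complex.I) / 2 := by
  have hd : HasFDerivAt (fderiv ℝ u) (fderiv ℝ (fderiv ℝ u) z) z :=
    (((smooth_fderiv hU hu).contDiffAt (hU.mem_nhds hz)).differentiableAt (by simp)).hasFDerivAt
  have h1 := hd.clm_apply (hasFDerivAt_const (1 : ℂ) z)
  have h2 := hd.clm_apply (hasFDerivAt_const Complex.I z)
  have h3 := (h1.add (h2.const_mul a)).mul_const (2⁻¹ : ℂ)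
  have h4 : HasFDerivAt (wirt a u) _ z := h3
  rw [h4.fderiv]
  simp
  ring

/-- Symmetry of the second real derivative, expressed for the operators `wirt a`. -/
lemma wirt_comm (hU : IsOpen U) (hu : ContDiffOn ℝ ∞ u U) (hz : z ∈ U) :
    wirt a (wirt b u) z = wirt b (wirt a u) z := by
  have hs : IsSymmSndFDerivAt ℝ u z :=
    (hu.contDiffAt (hU.mem_nhds hz)).isSymmSndFDerivAt (by
      simp only [minSmoothness_of_isRCLikeNormedField]
      exact WithTop.coe_le_coe.2 (le_top : (2 : ℕ∞) ≤ ⊤))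
  have h := hs.eq 1 Complex.I
  conv_lhs => unfold wirt
  conv_rhs => unfold wirt
  change (fderiv ℝ (wirt b u) z 1 + a * fderiv ℝ (wirt b u) z Complex.I) / 2
    = (fderiv ℝ (wirt a u) z 1 + b * fderiv ℝ (wirt a u) z Complex.I) / 2
  rw [fderiv_wirt b hU hu hz, fderiv_wirt b hU hu hz, fderiv_wirt a hU hu hz,
    fderiv_wirt a hU hu hz, h]
  ring

end Calculus

/-- The identity `∂̄S = ∂³μ + 2 ∂μ · S + μ · ∂S` for the Schwarzian `S` of `f`, together with the
smoothness of `S`. The pair `(∂, ∂̄)` is replaced by `(wirt a, wirt b)`. -/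
lemma schwarz_aux {U : Set ℂ} (hU : IsOpen U) {f : ℂ → ℂ} (a b : ℂ)
    (hf : ContDiffOn ℝ ∞ f U) (hf' : ∀ z ∈ U, wirt a f z ≠ 0)
    {μ S : ℂ → ℂ} (hμ : μ = fun w => wirt b f w / wirt a f w)
    (hS : S = fun w => wirt a (wirt a (wirt a f)) w / wirt a f w
      - (3/2) * (wirt a (wirt a f) w / wirt a f w)^2) :
    ContDiffOn ℝ ∞ S U ∧ ∀ z ∈ U, wirt b S z
      = wirt a (wirt a (wirt a μ)) z + 2 * wirt a μ z * S z + μ z * wirt a S z := by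
  set p := wirt a f with hp
  have sp : ContDiffOn ℝ ∞ p U := smooth_wirt a hU hf
  have sp' := smooth_wirt a hU sp
  have sμ : ContDiffOn ℝ ∞ μ U := by
    simp only [hμ, div_eq_mul_inv]
    exact (smooth_wirt b hU hf).mul (sp.inv hf')
  have sμ' := smooth_wirt a hU sμ
  have sμ'' := smooth_wirt a hU sμ'
  obtain ⟨N, hN⟩ : ∃ N : ℂ → ℂ, N = fun w => wirt a p w / p w := ⟨_, rfl⟩
  have sN : ContDiffOn ℝ ∞ N U := by
    simp only [hN, div_eq_mul_inv]
    exact sp'.mul (sp.inv hf')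
  have sN' := smooth_wirt a hU sN
  have d : ∀ {u : ℂ → ℂ}, ContDiffOn ℝ ∞ u U → ∀ {z}, z ∈ U → DifferentiableAt ℝ u z :=
    fun hu _ hz => differentiableAt_of_smooth hU hu hz
  have e1 : Set.EqOn (wirt b f) (fun w => μ w * p w) U := fun w hw => by
    have := hf' w hw
    simp only [hμ]; field_simp
  have e2 : Set.EqOn (wirt a p) (fun w => N w * p w) U := fun w hw => by
    have := hf' w hw
    simp only [hN]; field_simp
  have e3 : Set.EqOn (wirt b p) (fun w => wirt a μ w * p w + μ w * wirt a p w) U :=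
    fun w hw => by
      rw [hp, wirt_comm b a hU hf hw, wirt_congr a hU e1 hw, wirt_mul a (d sμ hw) (d sp hw)]
  have e4 : Set.EqOn (wirt a (wirt a p)) (fun w => wirt a N w * p w + N w * wirt a p w) U :=
    fun w hw => by
      rw [wirt_congr a hU e2 hw, wirt_mul a (d sN hw) (d sp hw)]
  have eS : Set.EqOn S (fun w => wirt a N w - (1/2) * (N w * N w)) U := fun w hw => by
    have := hf' w hw
    simp only [hS]
    rw [e4 hw]
    simp only [e2 hw]
    field_simp
    ring
  have eN : Set.EqOn (wirt b N)
      (fun w => wirt a (wirt a μ) w + (wirt a μ w * N w + μ w * wirt a N w)) U := fun w hw => by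
    -- two evaluations of `∂̄∂p`, compared after cancelling `p`
    have h1 : wirt b (wirt a p) w = wirt b N w * p w + N w * wirt b p w := by
      rw [wirt_congr b hU e2 hw, wirt_mul b (d sN hw) (d sp hw)]
    rw [wirt_comm b a hU sp hw, wirt_congr a hU e3 hw,
      wirt_add a (d (sμ'.mul sp) hw) (d (sμ.mul sp') hw),
      wirt_mul a (d sμ' hw) (d sp hw), wirt_mul a (d sμ hw) (d sp' hw), e4 hw, e3 hw] at h1
    simp only [e2 hw] at h1
    apply mul_right_cancel₀ (hf' w hw)
    simp only
    linear_combination -h1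
  have sNN : ContDiffOn ℝ ∞ (fun w => N w * N w) U := sN.mul sN
  have sNN' : ContDiffOn ℝ ∞ (fun w => (1/2 : ℂ) * (N w * N w)) U := contDiffOn_const.mul sNN
  refine ⟨(sN'.sub sNN').congr eS, fun z hz => ?_⟩
  have dS : ∀ c, wirt c S z = wirt c (wirt a N) z - (1/2) * (wirt c N z * N z + N z * wirt c N z) :=
    fun c => by
      rw [wirt_congr c hU eS hz, wirt_sub c (d sN' hz) (d sNN' hz),
        wirt_const_mul c _ (d sNN hz), wirt_mul c (d sN hz) (d sN hz)]
  rw [dS, dS, eS hz, wirt_comm b a hU sN hz, wirt_congr a hU eN hz, eN hz,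
    wirt_add a (d sμ'' hz) (d ((sμ'.mul sN).add (sμ.mul sN')) hz),
    wirt_add a (d (sμ'.mul sN) hz) (d (sμ.mul sN') hz),
    wirt_mul a (d sμ' hz) (d sN hz), wirt_mul a (d sμ hz) (d sN' hz)]
  ring

/-- `∂̄_μ^{(2)}({f,z} − h) = D_h μ − ∂̄h` on `U`, where `μ = ∂̄f/∂f`. -/
theorem stmt1 (U : Set ℂ) (hU : IsOpen U) (f h : ℂ → ℂ)
    (hf : ContDiffOn ℝ (⊤ : ℕ∞) f U) (hf' : ∀ z ∈ U, wd f z ≠ 0)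
    (hh : ContDiffOn ℝ (⊤ : ℕ∞) h U) :
    ∀ z ∈ U,
      dbarMu (fun w => wdbar f w / wd f w) 2 (fun w => schwarz f w - h w) z
        = Dop h (fun w => wdbar f w / wd f w) z - wdbar h z := by
  intro z hz
  rw [wd_eq_wirt] at hf'
  obtain ⟨sS, key⟩ := schwarz_aux hU (-Complex.I) Complex.I hf hf' rfl
    (S := schwarz f) (by funext w; simp only [schwarz, wd_eq_wirt])
  have dS := differentiableAt_of_smooth hU sS hz
  have dh := differentiableAt_of_smooth hU hh hz
  simp only [dbarMu, Dop, wd_eq_wirt, wdbar_eq_wirt]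
  rw [wirt_sub _ dS dh, wirt_sub _ dS dh, key z hz]
  push_cast
  ring
end

section
/- Let U ⊆ ℂ be open and let μ, h : U → ℂ be smooth. Then the operators ∂̄_μ and D_h commute, i.e. D_h(∂̄_μ^{(−1)} v) = ∂̄_μ^{(2)}(D_h v) on U for every smooth v : U → ℂ, if and only if D_h μ = ∂̄h on U. -/
/-!
Write `E = D_h μ - ∂̄h`. Expanding both sides with the Leibniz rule and `∂∂̄ = ∂̄∂` gives, for
every smooth `v`, the identity
`D_h (∂̄_μ^{(-1)} v) - ∂̄_μ^{(2)} (D_h v) = 2 E ∂v + (∂E) v` on `U` (`commutator_eq`).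
If `E = 0` on the open set `U`, the right-hand side vanishes there. Conversely, evaluating the
identity for `v = z - z₀` at `z₀ ∈ U`, where `v = 0` and `∂v = 1`, gives `E z₀ = 0`.
-/

open Complex MeasureTheory

/-- `IsWd U u u'`: both functions are smooth on `U` and `∂u = u'` there. Recording the derivative
as a second function makes iterated derivatives compose without any global function equality. -/
structure IsWd (U : Set ℂ) (u u' : ℂ → ℂ) : Prop where
  smooth : ContDiffOn ℝ (⊤ : ℕ∞) u U
  smooth' : ContDiffOn ℝ (⊤ : ℕ∞) u' U
  eq : ∀ z ∈ U, wd u z = u' z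

/-- The analogue of `IsWd` for `∂̄`. -/
structure IsWdbar (U : Set ℂ) (u u' : ℂ → ℂ) : Prop where
  smooth : ContDiffOn ℝ (⊤ : ℕ∞) u U
  smooth' : ContDiffOn ℝ (⊤ : ℕ∞) u' U
  eq : ∀ z ∈ U, wdbar u z = u' z

section

variable {U : Set ℂ} {f g f' g' : ℂ → ℂ}

lemma smooth_fderiv_s3 (hU : IsOpen U) (hf : ContDiffOn ℝ (⊤ : ℕ∞) f U) (c : ℂ) :
    ContDiffOn ℝ (⊤ : ℕ∞) (fun z => fderiv ℝ f z c) U :=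
  (hf.fderiv_of_isOpen hU (m := ((⊤ : ℕ∞) : WithTop ℕ∞)) (by simp)).clm_apply contDiffOn_const

lemma smooth_wd (hU : IsOpen U) (hf : ContDiffOn ℝ (⊤ : ℕ∞) f U) :
    ContDiffOn ℝ (⊤ : ℕ∞) (wd f) U :=
  ((smooth_fderiv_s3 hU hf 1).sub (contDiffOn_const.mul (smooth_fderiv_s3 hU hf I))).div_const 2

lemma smooth_wdbar (hU : IsOpen U) (hf : ContDiffOn ℝ (⊤ : ℕ∞) f U) :
    ContDiffOn ℝ (⊤ : ℕ∞) (wdbar f) U :=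
  ((smooth_fderiv_s3 hU hf 1).add (contDiffOn_const.mul (smooth_fderiv_s3 hU hf I))).div_const 2

lemma diffAt (hU : IsOpen U) (hf : ContDiffOn ℝ (⊤ : ℕ∞) f U) {z : ℂ} (hz : z ∈ U) :
    DifferentiableAt ℝ f z :=
  (hf.contDiffAt (hU.mem_nhds hz)).differentiableAt (by simp)

lemma fderiv_congr_on (hU : IsOpen U) (h : ∀ z ∈ U, f z = g z) {z : ℂ} (hz : z ∈ U) :
    fderiv ℝ f z = fderiv ℝ g z :=
  (Filter.eventuallyEq_of_mem (hU.mem_nhds hz) h).fderiv_eq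

lemma wd_congr_on (hU : IsOpen U) (h : ∀ z ∈ U, f z = g z) : ∀ z ∈ U, wd f z = wd g z := by
  intro z hz
  simp only [wd, fderiv_congr_on hU h hz]

lemma IsWd.of_eq (hf : IsWd U f f') (h : ∀ z, f' z = g' z) : IsWd U f g' := by
  obtain rfl : f' = g' := funext h
  exact hf

lemma isWd_wd (hU : IsOpen U) (hf : ContDiffOn ℝ (⊤ : ℕ∞) f U) : IsWd U f (wd f) :=
  ⟨hf, smooth_wd hU hf, fun _ _ => rfl⟩

lemma isWdbar_wdbar (hU : IsOpen U) (hf : ContDiffOn ℝ (⊤ : ℕ∞) f U) : IsWdbar U f (wdbar f) :=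
  ⟨hf, smooth_wdbar hU hf, fun _ _ => rfl⟩

lemma isWd_const (c : ℂ) : IsWd U (fun _ => c) (fun _ => 0) :=
  ⟨contDiffOn_const, contDiffOn_const, fun z _ => by simp [wd]⟩

lemma isWdbar_const (c : ℂ) : IsWdbar U (fun _ => c) (fun _ => 0) :=
  ⟨contDiffOn_const, contDiffOn_const, fun z _ => by simp [wdbar]⟩

lemma IsWd.add (hU : IsOpen U) (hf : IsWd U f f') (hg : IsWd U g g') :
    IsWd U (fun z => f z + g z) (fun z => f' z + g' z) :=
  ⟨hf.smooth.add hg.smooth, hf.smooth'.add hg.smooth', fun z hz => by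
    rw [← hf.eq z hz, ← hg.eq z hz]
    simp only [wd, fderiv_fun_add (diffAt hU hf.smooth hz) (diffAt hU hg.smooth hz),
      add_apply]
    ring⟩

lemma IsWdbar.add (hU : IsOpen U) (hf : IsWdbar U f f') (hg : IsWdbar U g g') :
    IsWdbar U (fun z => f z + g z) (fun z => f' z + g' z) :=
  ⟨hf.smooth.add hg.smooth, hf.smooth'.add hg.smooth', fun z hz => by
    rw [← hf.eq z hz, ← hg.eq z hz]
    simp only [wdbar, fderiv_fun_add (diffAt hU hf.smooth hz) (diffAt hU hg.smooth hz),
      add_apply]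
    ring⟩

lemma IsWd.sub (hU : IsOpen U) (hf : IsWd U f f') (hg : IsWd U g g') :
    IsWd U (fun z => f z - g z) (fun z => f' z - g' z) :=
  ⟨hf.smooth.sub hg.smooth, hf.smooth'.sub hg.smooth', fun z hz => by
    rw [← hf.eq z hz, ← hg.eq z hz]
    simp only [wd, fderiv_fun_sub (diffAt hU hf.smooth hz) (diffAt hU hg.smooth hz),
      sub_apply]
    ring⟩

lemma IsWd.mul (hU : IsOpen U) (hf : IsWd U f f') (hg : IsWd U g g') :
    IsWd U (fun z => f z * g z) (fun z => f' z * g z + f z * g' z) :=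
  ⟨hf.smooth.mul hg.smooth, (hf.smooth'.mul hg.smooth).add (hf.smooth.mul hg.smooth'),
    fun z hz => by
    rw [← hf.eq z hz, ← hg.eq z hz]
    simp only [wd, fderiv_fun_mul (diffAt hU hf.smooth hz) (diffAt hU hg.smooth hz),
      add_apply, smul_apply, smul_eq_mul]
    ring⟩

lemma IsWdbar.mul (hU : IsOpen U) (hf : IsWdbar U f f') (hg : IsWdbar U g g') :
    IsWdbar U (fun z => f z * g z) (fun z => f' z * g z + f z * g' z) :=
  ⟨hf.smooth.mul hg.smooth, (hf.smooth'.mul hg.smooth).add (hf.smooth.mul hg.smooth'),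
    fun z hz => by
    rw [← hf.eq z hz, ← hg.eq z hz]
    simp only [wdbar, fderiv_fun_mul (diffAt hU hf.smooth hz) (diffAt hU hg.smooth hz),
      add_apply, smul_apply, smul_eq_mul]
    ring⟩

lemma fderiv_fderiv_apply (hU : IsOpen U) (hf : ContDiffOn ℝ (⊤ : ℕ∞) f U) {z : ℂ} (hz : z ∈ U)
    (a b : ℂ) :
    fderiv ℝ (fun w => fderiv ℝ f w a) z b = fderiv ℝ (fderiv ℝ f) z b a := by
  have hd : DifferentiableAt ℝ (fderiv ℝ f) z :=
    ((hf.fderiv_of_isOpen hU (m := ((⊤ : ℕ∞) : WithTop ℕ∞)) (by simp)).contDiffAt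
      (hU.mem_nhds hz)).differentiableAt (by simp)
  rw [fderiv_clm_apply hd (differentiableAt_const a)]
  simp

lemma fderiv_wd (hU : IsOpen U) (hf : ContDiffOn ℝ (⊤ : ℕ∞) f U) {z : ℂ} (hz : z ∈ U) (b : ℂ) :
    fderiv ℝ (wd f) z b =
      (fderiv ℝ (fderiv ℝ f) z b 1 - I * fderiv ℝ (fderiv ℝ f) z b I) / 2 := by
  have h1 := diffAt hU (smooth_fderiv_s3 hU hf 1) hz
  have h2 := diffAt hU (smooth_fderiv_s3 hU hf I) hz
  have h3 := ((h1.hasFDerivAt.sub (h2.hasFDerivAt.const_mul I)).mul_const (2⁻¹ : ℂ)).fderiv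
  have h4 : wd f = fun z => (fderiv ℝ f z 1 - I * fderiv ℝ f z I) * 2⁻¹ := by
    funext z
    simp only [wd, div_eq_mul_inv]
  rw [h4]
  erw [h3]
  simp only [smul_apply, sub_apply, smul_eq_mul, fderiv_fderiv_apply hU hf hz]
  ring

lemma fderiv_wdbar (hU : IsOpen U) (hf : ContDiffOn ℝ (⊤ : ℕ∞) f U) {z : ℂ} (hz : z ∈ U) (b : ℂ) :
    fderiv ℝ (wdbar f) z b =
      (fderiv ℝ (fderiv ℝ f) z b 1 + I * fderiv ℝ (fderiv ℝ f) z b I) / 2 := by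
  have h1 := diffAt hU (smooth_fderiv_s3 hU hf 1) hz
  have h2 := diffAt hU (smooth_fderiv_s3 hU hf I) hz
  have h3 := ((h1.hasFDerivAt.add (h2.hasFDerivAt.const_mul I)).mul_const (2⁻¹ : ℂ)).fderiv
  have h4 : wdbar f = fun z => (fderiv ℝ f z 1 + I * fderiv ℝ f z I) * 2⁻¹ := by
    funext z
    simp only [wdbar, div_eq_mul_inv]
  rw [h4]
  erw [h3]
  simp only [smul_apply, add_apply, smul_eq_mul, fderiv_fderiv_apply hU hf hz]
  ring

/-- `∂∂̄f = ∂̄∂f`, by symmetry of the second derivative. -/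
lemma isWd_wdbar (hU : IsOpen U) (hf : ContDiffOn ℝ (⊤ : ℕ∞) f U) :
    IsWd U (wdbar f) (wdbar (wd f)) :=
  ⟨smooth_wdbar hU hf, smooth_wdbar hU (smooth_wd hU hf), fun z hz => by
    have hsm : ((2 : ℕ∞) : WithTop ℕ∞) ≤ ((⊤ : ℕ∞) : WithTop ℕ∞) := WithTop.coe_le_coe.mpr le_top
    have hs : fderiv ℝ (fderiv ℝ f) z 1 I = fderiv ℝ (fderiv ℝ f) z I 1 :=
      ((hf.contDiffAt (hU.mem_nhds hz)).isSymmSndFDerivAt (by simpa using hsm)).eq 1 I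
    rw [wd, wdbar, fderiv_wdbar hU hf hz, fderiv_wdbar hU hf hz, fderiv_wd hU hf hz,
      fderiv_wd hU hf hz, hs]
    ring⟩

/-- The commutator identity `D_h ∂̄_μ^{(-1)} v - ∂̄_μ^{(2)} D_h v = 2 E ∂v + (∂E) v` with
`E = D_h μ - ∂̄h`. -/
lemma commutator_eq (hU : IsOpen U) {μ h v : ℂ → ℂ}
    (hμ : ContDiffOn ℝ (⊤ : ℕ∞) μ U) (hh : ContDiffOn ℝ (⊤ : ℕ∞) h U)
    (hv : ContDiffOn ℝ (⊤ : ℕ∞) v U) {z : ℂ} (hz : z ∈ U) :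
    Dop h (dbarMu μ (-1) v) z - dbarMu μ 2 (Dop h v) z =
      2 * (Dop h μ z - wdbar h z) * wd v z + wd (fun w => Dop h μ w - wdbar h w) z * v z := by
  have m0 := isWd_wd hU hμ
  have m1 := isWd_wd hU m0.smooth'
  have m2 := isWd_wd hU m1.smooth'
  have m3 := isWd_wd hU m2.smooth'
  have v0 := isWd_wd hU hv
  have v1 := isWd_wd hU v0.smooth'
  have v2 := isWd_wd hU v1.smooth'
  have v3 := isWd_wd hU v2.smooth'
  have h0 := isWd_wd hU hh
  have h1 := isWd_wd hU h0.smooth'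
  have two := isWd_const (U := U) 2
  -- the three successive derivatives of `w = ∂̄v - μ ∂v + (∂μ) v`
  have w1 : IsWd U (dbarMu μ (-1) v) (fun z => wdbar (wd v) z
      - μ z * wd (wd v) z + wd (wd μ) z * v z) :=
    (((isWd_wdbar hU hv).sub hU (m0.mul hU v1)).sub hU
      (((isWd_const ((-1 : ℤ) : ℂ)).mul hU m1).mul hU v0)).of_eq fun z => by
        push_cast
        ring
  have w2 : IsWd U _ (fun z => wdbar (wd (wd v)) z - wd μ z * wd (wd v) z
      - μ z * wd (wd (wd v)) z + wd (wd (wd μ)) z * v z + wd (wd μ) z * wd v z) :=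
    (((isWd_wdbar hU v0.smooth').sub hU (m0.mul hU v2)).add hU (m2.mul hU v0)).of_eq
      fun z => by ring
  have w3 : IsWd U _ (fun z => wdbar (wd (wd (wd v))) z - 2 * wd μ z * wd (wd (wd v)) z
      - μ z * wd (wd (wd (wd v))) z + wd (wd (wd (wd μ))) z * v z
      + 2 * wd (wd (wd μ)) z * wd v z) :=
    (((((isWd_wdbar hU v1.smooth').sub hU (m1.mul hU v2)).sub hU (m0.mul hU v3)).add hU
      (m3.mul hU v0)).add hU (m2.mul hU v1)).of_eq fun z => by ring
  have ew2 := fun z hz => (wd_congr_on hU w1.eq z hz).trans (w2.eq z hz)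
  have ew3 := (wd_congr_on hU ew2 z hz).trans (w3.eq z hz)
  have dv := ((v3.add hU ((two.mul hU h0).mul hU v1)).add hU (h1.mul hU v0)).eq z hz
  have bv := (((isWdbar_wdbar hU v2.smooth').add hU
    (((isWdbar_const 2).mul hU (isWdbar_wdbar hU hh)).mul hU (isWdbar_wdbar hU v0.smooth'))).add hU
    ((isWdbar_wdbar hU h0.smooth').mul hU (isWdbar_wdbar hU hv))).eq z hz
  have dE := (((m3.add hU ((two.mul hU h0).mul hU m1)).add hU (h1.mul hU m0)).sub hU
    (isWd_wdbar hU hh)).eq z hz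
  have e1 : wd (Dop h v) z = _ := dv
  have e2 : wdbar (Dop h v) z = _ := bv
  have e3 : wd (fun w => Dop h μ w - wdbar h w) z = _ := dE
  rw [e3, dbarMu, e1, e2, Dop, ew3, w1.eq z hz]
  simp only [Dop, dbarMu]
  push_cast
  ring

end

/-- the operators `∂̄_μ` and `D_h` commute on every smooth `v` on `U`
iff the Euler–Lagrange equation `D_h μ = ∂̄h` holds on `U`. -/
theorem stmt3 (U : Set ℂ) (hU : IsOpen U) (μ h : ℂ → ℂ)
    (hμ : ContDiffOn ℝ (⊤ : ℕ∞) μ U) (hh : ContDiffOn ℝ (⊤ : ℕ∞) h U) :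
    (∀ v : ℂ → ℂ, ContDiffOn ℝ (⊤ : ℕ∞) v U →
        ∀ z ∈ U, Dop h (dbarMu μ (-1) v) z = dbarMu μ 2 (Dop h v) z)
      ↔ (∀ z ∈ U, Dop h μ z = wdbar h z) := by
  constructor
  · intro H z hz
    have hv : ContDiff ℝ (⊤ : ℕ∞) (fun w : ℂ => w - z) := contDiff_id.sub contDiff_const
    have hwd : wd (fun w : ℂ => w - z) z = 1 := by
      simp only [wd, fderiv_sub_const, fderiv_fun_id, ContinuousLinearMap.id_apply, I_mul_I]
      norm_num
    have key := commutator_eq hU hμ hh hv.contDiffOn hz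
    rw [H _ hv.contDiffOn z hz, hwd] at key
    linear_combination (-1 / 2 : ℂ) * key
  · intro H v hv z hz
    have hE : ∀ w ∈ U, Dop h μ w - wdbar h w = 0 := fun w hw => sub_eq_zero.mpr (H w hw)
    have hE' : wd (fun w => Dop h μ w - wdbar h w) z = 0 :=
      (wd_congr_on (g := fun _ => 0) hU hE z hz).trans ((isWd_const 0).eq z hz)
    have key := commutator_eq hU hμ hh hv hz
    rw [hE', hE z hz] at key
    linear_combination key
end

section
/- Let U, U' ⊆ ℂ be open, g : U → U' a biholomorphism, and V, V' ⊆ ℂ open with G : V → V' a biholomorphism. Let f₂ : U → V and f₁ : U' → V' be smooth with nowhere-vanishing Wirtinger derivatives ∂f₂, ∂f₁, satisfying the intertwining relation f₁∘g = G∘f₂ on U. Set μ₁ = ∂̄f₁/∂f₁ on U' and μ₂ = ∂̄f₂/∂f₂ on U. Let h₁ : U' → ℂ be smooth and set h₂ = (h₁∘g)·(g')² + S(g) on U, where S(g) = g'''/g' − (3/2)·(g''/g')². Suppose σ, τ : U → ℂ are smooth with e^σ = G'∘f₂ and e^τ = g' (branches of the logarithms). Define ω₁ = (∂²f₁/∂f₁)·∂μ₁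 + 2μ₁·h₁ on U' and ω₂ = (∂²f₂/∂f₂)·∂μ₂ + 2μ₂·h₂ on U, and put A = −(σ+τ)·(∂²f₂/∂f₂) + σ·(g''/g') and B = 2μ₂·(g''/g') − (σ+τ)·(∂̄∂f₂/∂f₂). Then on U one has the descent identity ω₂ − (ω₁∘g)·g'·conj(g') = ∂B − ∂̄A; i.e., with the convention d(A dz + B dz̄) = (∂B − ∂̄A) dz∧dz̄, the difference of the Polyakov 2-forms on the overlap is the exterior derivative of the 1-form θ = 2μ₂(g''/g') dz̄ − (σ+τ)·d(log ∂f₂) + σ·dτ. -/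
/-!
The chain rule applied to `f₁ ∘ g = G ∘ f₂` expresses all derivatives of `f₁` at `g z` through data
on `U`. Write `p = ∂f₂`, `n = ∂p/p`, `a = g''/g' = ∂τ`. Then

* `∂f₁ ∘ g = e^(σ-τ) p`, hence `(∂²f₁/∂f₁) ∘ g = (n + ∂σ - a) / g'`;
* `μ₁ ∘ g = μ₂ g' / conj g'`, hence `∂μ₁ ∘ g = (∂μ₂ + μ₂ a) / conj g'`;
* `∂̄τ = 0` and `∂̄σ = μ₂ ∂σ`, because `σ` is a logarithm of a holomorphic function of `f₂`;
* `∂̄p / p = ∂μ₂ + μ₂ n`, from `∂̄∂f₂ = ∂∂̄f₂ = ∂(μ₂ p)`.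

Since `∂(∂̄p/p) = ∂̄(∂p/p)`, the undifferentiated `σ + τ` drops out of `∂B - ∂̄A`, and with
`S(g) = a' - a²/2` both sides become the same polynomial in `n`, `a`, `a'`, `μ₂`, `∂μ₂`, `∂σ`.
-/

open Complex MeasureTheory

open scoped ContDiff Topology ComplexConjugate

/-! ### Calculus of the Wirtinger derivatives -/

section Wirtinger

variable {u v : ℂ → ℂ} {z : ℂ}

lemma wd_congr (h : u =ᶠ[𝓝 z] v) : wd u z = wd v z := by
  simp only [wd, h.fderiv_eq]

lemma wdbar_congr (h : u =ᶠ[𝓝 z] v) : wdbar u z = wdbar v z := by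
  simp only [wdbar, h.fderiv_eq]

lemma wd_add (hu : DifferentiableAt ℝ u z) (hv : DifferentiableAt ℝ v z) :
    wd (fun x => u x + v x) z = wd u z + wd v z := by
  simp only [wd, fderiv_fun_add hu hv, add_apply]; ring

lemma wdbar_add (hu : DifferentiableAt ℝ u z) (hv : DifferentiableAt ℝ v z) :
    wdbar (fun x => u x + v x) z = wdbar u z + wdbar v z := by
  simp only [wdbar, fderiv_fun_add hu hv, add_apply]; ring

lemma wd_sub (hu : DifferentiableAt ℝ u z) (hv : DifferentiableAt ℝ v z) :
    wd (fun x => u x - v x) z = wd u z - wd v z := by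
  simp only [wd, fderiv_fun_sub hu hv, sub_apply]; ring

lemma wdbar_neg : wdbar (fun x => -u x) z = -wdbar u z := by
  simp only [wdbar, fderiv_fun_neg, neg_apply]; ring

lemma wd_mul (hu : DifferentiableAt ℝ u z) (hv : DifferentiableAt ℝ v z) :
    wd (fun x => u x * v x) z = u z * wd v z + wd u z * v z := by
  simp only [wd, fderiv_fun_mul hu hv, add_apply, smul_apply, smul_eq_mul]; ring

lemma wdbar_mul (hu : DifferentiableAt ℝ u z) (hv : DifferentiableAt ℝ v z) :
    wdbar (fun x => u x * v x) z = u z * wdbar v z + wdbar u z * v z := by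
  simp only [wdbar, fderiv_fun_mul hu hv, add_apply, smul_apply, smul_eq_mul]; ring

lemma fderiv_real_of_holo (hu : DifferentiableAt ℂ u z) (x : ℂ) :
    fderiv ℝ u z x = deriv u z * x := by
  rw [(hu.hasFDerivAt.restrictScalars ℝ).fderiv]
  simp [mul_comm]

lemma wd_holo (hu : DifferentiableAt ℂ u z) : wd u z = deriv u z := by
  simp only [wd, fderiv_real_of_holo hu]
  linear_combination (-deriv u z / 2) * Complex.I_mul_I

lemma wdbar_holo (hu : DifferentiableAt ℂ u z) : wdbar u z = 0 := by
  simp only [wdbar, fderiv_real_of_holo hu]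
  linear_combination (deriv u z / 2) * Complex.I_mul_I

lemma fderiv_holo_comp {F : ℂ → ℂ} (hF : DifferentiableAt ℂ F (u z))
    (hu : DifferentiableAt ℝ u z) (x : ℂ) :
    fderiv ℝ (fun y => F (u y)) z x = deriv F (u z) * fderiv ℝ u z x := by
  rw [← fderiv_real_of_holo hF]
  exact congrArg (· x) (fderiv_comp z (hF.restrictScalars ℝ) hu)

lemma wd_holo_comp {F : ℂ → ℂ} (hF : DifferentiableAt ℂ F (u z)) (hu : DifferentiableAt ℝ u z) :
    wd (fun y => F (u y)) z = deriv F (u z) * wd u z := by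
  simp only [wd, fderiv_holo_comp hF hu]; ring

lemma wdbar_holo_comp {F : ℂ → ℂ} (hF : DifferentiableAt ℂ F (u z))
    (hu : DifferentiableAt ℝ u z) :
    wdbar (fun y => F (u y)) z = deriv F (u z) * wdbar u z := by
  simp only [wdbar, fderiv_holo_comp hF hu]; ring

lemma fderiv_eq_wd_wdbar (x : ℂ) : fderiv ℝ u z x = wd u z * x + wdbar u z * conj x := by
  have hx : fderiv ℝ u z x = x.re * fderiv ℝ u z 1 + x.im * fderiv ℝ u z Complex.I := by
    conv_lhs => rw [show x = x.re • (1 : ℂ) + x.im • Complex.I by simp]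
    rw [map_add, map_smul, map_smul, Complex.real_smul, Complex.real_smul]
  rw [hx, wd, wdbar]
  have h1 : x = x.re + x.im * Complex.I := (Complex.re_add_im x).symm
  have h2 : conj x = x.re - x.im * Complex.I := by
    apply Complex.ext <;> simp
  rw [h2]
  conv_rhs => enter [1, 2]; rw [h1]
  linear_combination (x.im * fderiv ℝ u z Complex.I) * Complex.I_mul_I

lemma fderiv_comp_holo {g : ℂ → ℂ} (hu : DifferentiableAt ℝ u (g z))
    (hg : DifferentiableAt ℂ g z) (x : ℂ) :
    fderiv ℝ (fun y => u (g y)) z x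
      = wd u (g z) * (deriv g z * x) + wdbar u (g z) * (conj (deriv g z) * conj x) := by
  rw [← map_mul, ← fderiv_eq_wd_wdbar, ← fderiv_real_of_holo hg]
  exact congrArg (· x) (fderiv_comp z hu (hg.restrictScalars ℝ))

lemma wd_comp_holo {g : ℂ → ℂ} (hu : DifferentiableAt ℝ u (g z)) (hg : DifferentiableAt ℂ g z) :
    wd (fun y => u (g y)) z = wd u (g z) * deriv g z := by
  rw [wd, fderiv_comp_holo hu hg, fderiv_comp_holo hu hg, map_one, Complex.conj_I]
  linear_combination (-wd u (g z) * deriv g z / 2 + wdbar u (g z) * conj (deriv g z) / 2) *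
    Complex.I_mul_I

lemma wdbar_comp_holo {g : ℂ → ℂ} (hu : DifferentiableAt ℝ u (g z))
    (hg : DifferentiableAt ℂ g z) :
    wdbar (fun y => u (g y)) z = wdbar u (g z) * conj (deriv g z) := by
  rw [wdbar, fderiv_comp_holo hu hg, fderiv_comp_holo hu hg, map_one, Complex.conj_I]
  linear_combination (wd u (g z) * deriv g z / 2 - wdbar u (g z) * conj (deriv g z) / 2) *
    Complex.I_mul_I

lemma wd_div (hu : DifferentiableAt ℝ u z) (hv : DifferentiableAt ℝ v z) (h0 : v z ≠ 0) :
    wd (fun x => u x / v x) z = (wd u z * v z - u z * wd v z) / v z ^ 2 := by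
  have hi : wd (fun x => (v x)⁻¹) z = -(v z ^ 2)⁻¹ * wd v z := by
    rw [wd_holo_comp (F := fun w => w⁻¹) (differentiableAt_inv h0) hv, deriv_inv]
  simp only [div_eq_mul_inv]
  rw [wd_mul hu (hv.fun_inv h0), hi]
  field_simp
  ring

lemma wdbar_div (hu : DifferentiableAt ℝ u z) (hv : DifferentiableAt ℝ v z) (h0 : v z ≠ 0) :
    wdbar (fun x => u x / v x) z = (wdbar u z * v z - u z * wdbar v z) / v z ^ 2 := by
  have hi : wdbar (fun x => (v x)⁻¹) z = -(v z ^ 2)⁻¹ * wdbar v z := by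
    rw [wdbar_holo_comp (F := fun w => w⁻¹) (differentiableAt_inv h0) hv, deriv_inv]
  simp only [div_eq_mul_inv]
  rw [wdbar_mul hu (hv.fun_inv h0), hi]
  field_simp
  ring

/-- The conjugate of a holomorphic function is annihilated by `∂`. -/
lemma wd_conj_holo (hu : DifferentiableAt ℂ u z) : wd (fun x => conj (u x)) z = 0 := by
  have h (x : ℂ) : fderiv ℝ (fun x => conj (u x)) z x = conj (deriv u z * x) := by
    rw [← fderiv_real_of_holo hu]
    exact congrArg (· x) (((Complex.conjCLE : ℂ →L[ℝ] ℂ).hasFDerivAt.comp z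
      (hu.restrictScalars ℝ).hasFDerivAt).fderiv)
  rw [wd, h, h, map_mul, map_mul, map_one, Complex.conj_I]
  linear_combination (conj (deriv u z) / 2) * Complex.I_mul_I

lemma contDiffAt_fderiv_apply (hu : ContDiffAt ℝ ∞ u z) (x : ℂ) :
    ContDiffAt ℝ ∞ (fun y => fderiv ℝ u y x) z :=
  (hu.fderiv_right (m := ∞) (by simp)).clm_apply contDiffAt_const

lemma contDiffAt_wd (hu : ContDiffAt ℝ ∞ u z) : ContDiffAt ℝ ∞ (wd u) z :=
  ((contDiffAt_fderiv_apply hu 1).sub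
    (contDiffAt_const.mul (contDiffAt_fderiv_apply hu Complex.I))).div_const 2

lemma contDiffAt_wdbar (hu : ContDiffAt ℝ ∞ u z) : ContDiffAt ℝ ∞ (wdbar u) z :=
  ((contDiffAt_fderiv_apply hu 1).add
    (contDiffAt_const.mul (contDiffAt_fderiv_apply hu Complex.I))).div_const 2

/-- The operators `∂` and `∂̄` commute, by the symmetry of the second derivative. -/
lemma wd_wdbar_comm (hu : ContDiffAt ℝ ∞ u z) : wd (wdbar u) z = wdbar (wd u) z := by
  have hd : DifferentiableAt ℝ (fderiv ℝ u) z :=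
    (hu.fderiv_right (m := ∞) (by simp)).differentiableAt (by simp)
  have hx (x : ℂ) : DifferentiableAt ℝ (fun y => fderiv ℝ u y x) z :=
    (contDiffAt_fderiv_apply hu x).differentiableAt (by simp)
  have hc (x y : ℂ) : fderiv ℝ (fun y => fderiv ℝ u y x) z y = fderiv ℝ (fderiv ℝ u) z y x := by
    rw [fderiv_clm_apply hd (differentiableAt_const x)]
    simp
  have hsymm : fderiv ℝ (fderiv ℝ u) z 1 Complex.I = fderiv ℝ (fderiv ℝ u) z Complex.I 1 :=
    (hu.isSymmSndFDerivAt (by simpa using WithTop.coe_le_coe.2 (le_top (a := (2 : ℕ∞))))) 1 Complex.I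
  have hp (y : ℂ) : fderiv ℝ (wdbar u) z y
      = (fderiv ℝ (fderiv ℝ u) z y 1 + Complex.I * fderiv ℝ (fderiv ℝ u) z y Complex.I) / 2 := by
    have := ((hx 1).hasFDerivAt.add ((hx Complex.I).hasFDerivAt.const_mul Complex.I)).mul_const
      (2 : ℂ)⁻¹
    have h2 : wdbar u = fun y => (fderiv ℝ u y 1 + Complex.I * fderiv ℝ u y Complex.I) * 2⁻¹ := by
      funext y; rw [wdbar, div_eq_mul_inv]
    rw [h2]
    refine (congrArg (· y) this.fderiv).trans ?_
    simp [hc]; ring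
  have hm (y : ℂ) : fderiv ℝ (wd u) z y
      = (fderiv ℝ (fderiv ℝ u) z y 1 - Complex.I * fderiv ℝ (fderiv ℝ u) z y Complex.I) / 2 := by
    have := ((hx 1).hasFDerivAt.sub ((hx Complex.I).hasFDerivAt.const_mul Complex.I)).mul_const
      (2 : ℂ)⁻¹
    have h2 : wd u = fun y => (fderiv ℝ u y 1 - Complex.I * fderiv ℝ u y Complex.I) * 2⁻¹ := by
      funext y; rw [wd, div_eq_mul_inv]
    rw [h2]
    refine (congrArg (· y) this.fderiv).trans ?_
    simp [hc]; ring
  rw [wd, wdbar, hp, hp, hm, hm, hsymm]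
  ring

end Wirtinger

/-! ### The descent identity -/

/-- descent identity for the Polyakov 2-form on the overlap of two
charts: `ω₂ − (ω₁∘g)·g'·conj(g') = ∂B − ∂̄A`, where `θ = A dz + B dz̄` is the
1-form `θ = 2μ₂(g''/g') dz̄ − (σ+τ)·d(log ∂f₂) + σ·dτ`. -/
theorem stmt12 (U U' V V' : Set ℂ)
    (hU : IsOpen U) (hU' : IsOpen U') (hV : IsOpen V) (hV' : IsOpen V')
    -- g : U → U' biholomorphism
    (g : ℂ → ℂ) (hg : DifferentiableOn ℂ g U) (hgbij : Set.BijOn g U U')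
    (hg' : ∀ z ∈ U, deriv g z ≠ 0)
    -- G : V → V' biholomorphism
    (G : ℂ → ℂ) (hG : DifferentiableOn ℂ G V) (hGbij : Set.BijOn G V V')
    (hG' : ∀ w ∈ V, deriv G w ≠ 0)
    -- the deformation maps f₂ : U → V and f₁ : U' → V'
    (f₁ f₂ : ℂ → ℂ)
    (hf₁ : ContDiffOn ℝ (⊤ : ℕ∞) f₁ U') (hf₁' : ∀ w ∈ U', wd f₁ w ≠ 0)
    (hf₂ : ContDiffOn ℝ (⊤ : ℕ∞) f₂ U) (hf₂' : ∀ z ∈ U, wd f₂ z ≠ 0)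
    (hf₂maps : Set.MapsTo f₂ U V)
    -- the intertwining relation f₁∘g = G∘f₂
    (hint : ∀ z ∈ U, f₁ (g z) = G (f₂ z))
    -- the Beltrami coefficients
    (μ₁ μ₂ : ℂ → ℂ)
    (hμ₁ : μ₁ = fun w => wdbar f₁ w / wd f₁ w)
    (hμ₂ : μ₂ = fun z => wdbar f₂ z / wd f₂ z)
    -- the projective connections
    (h₁ h₂ : ℂ → ℂ) (hh₁ : ContDiffOn ℝ (⊤ : ℕ∞) h₁ U')
    (hh₂ : ∀ z ∈ U, h₂ z = h₁ (g z) * (deriv g z)^2 + schwarzD g z)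
    -- branches of the logarithms: e^σ = G'∘f₂ and e^τ = g'
    (σ τ : ℂ → ℂ) (hσs : ContDiffOn ℝ (⊤ : ℕ∞) σ U) (hτs : ContDiffOn ℝ (⊤ : ℕ∞) τ U)
    (hσ : ∀ z ∈ U, Complex.exp (σ z) = deriv G (f₂ z))
    (hτ : ∀ z ∈ U, Complex.exp (τ z) = deriv g z)
    -- the Polyakov densities
    (ω₁ ω₂ : ℂ → ℂ)
    (hω₁ : ω₁ = fun w => (wd (wd f₁) w / wd f₁ w) * wd μ₁ w + 2 * μ₁ w * h₁ w)
    (hω₂ : ω₂ = fun z => (wd (wd f₂) z / wd f₂ z) * wd μ₂ z + 2 * μ₂ z * h₂ z)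
    -- the components of the 1-form θ = A dz + B dz̄
    (A B : ℂ → ℂ)
    (hA : A = fun z => -(σ z + τ z) * (wd (wd f₂) z / wd f₂ z)
                         + σ z * (deriv (deriv g) z / deriv g z))
    (hB : B = fun z => 2 * μ₂ z * (deriv (deriv g) z / deriv g z)
                         - (σ z + τ z) * (wdbar (wd f₂) z / wd f₂ z)) :
    ∀ z ∈ U,
      ω₂ z - ω₁ (g z) * deriv g z * (starRingEnd ℂ) (deriv g z)
        = wd B z - wdbar A z := by
  intro z hz
  -- regularity of the data
  have nhU : ∀ x ∈ U, U ∈ 𝓝 x := fun x hx => hU.mem_nhds hx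
  have sf₂ : ∀ x ∈ U, ContDiffAt ℝ ∞ f₂ x := fun x hx => hf₂.contDiffAt (nhU x hx)
  have sf₁ : ∀ x ∈ U, ContDiffAt ℝ ∞ f₁ (g x) := fun x hx =>
    hf₁.contDiffAt (hU'.mem_nhds (hgbij.mapsTo hx))
  have dR : ∀ {u : ℂ → ℂ} {x : ℂ}, ContDiffAt ℝ ∞ u x → DifferentiableAt ℝ u x :=
    fun h => h.differentiableAt (by simp)
  have dσ : ∀ x ∈ U, DifferentiableAt ℝ σ x := fun x hx => dR (hσs.contDiffAt (nhU x hx))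
  have dτ : ∀ x ∈ U, DifferentiableAt ℝ τ x := fun x hx => dR (hτs.contDiffAt (nhU x hx))
  have dg : ∀ x ∈ U, DifferentiableAt ℂ g x := fun x hx => hg.differentiableAt (nhU x hx)
  have hg1 : DifferentiableOn ℂ (deriv g) U := hg.deriv hU
  have hg2 : DifferentiableOn ℂ (deriv (deriv g)) U := hg1.deriv hU
  have dg1 : ∀ x ∈ U, DifferentiableAt ℂ (deriv g) x := fun x hx =>
    hg1.differentiableAt (nhU x hx)
  have dg2 : DifferentiableAt ℂ (deriv (deriv g)) z := hg2.differentiableAt (nhU z hz)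
  have dG : ∀ x ∈ U, DifferentiableAt ℂ G (f₂ x) := fun x hx =>
    hG.differentiableAt (hV.mem_nhds (hf₂maps hx))
  have dG1 : ∀ x ∈ U, DifferentiableAt ℂ (deriv G) (f₂ x) := fun x hx =>
    (hG.deriv hV).differentiableAt (hV.mem_nhds (hf₂maps hx))
  have ev : ∀ {u v : ℂ → ℂ}, (∀ x ∈ U, u x = v x) → u =ᶠ[𝓝 z] v := fun h =>
    Filter.eventuallyEq_of_mem (nhU z hz) h
  have ev' : ∀ {u v : ℂ → ℂ}, (∀ x ∈ U, u x = v x) → ∀ x ∈ U, u =ᶠ[𝓝 x] v := fun h x hx =>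
    Filter.eventuallyEq_of_mem (nhU x hx) h
  have cne : ∀ x ∈ U, conj (deriv g x) ≠ 0 := fun x hx => by
    simpa using hg' x hx
  -- first-order chain rule for the intertwining relation
  have E1 : ∀ x ∈ U, wd f₁ (g x) * deriv g x = deriv G (f₂ x) * wd f₂ x := fun x hx => by
    rw [← wd_comp_holo (dR (sf₁ x hx)) (dg x hx), ← wd_holo_comp (dG x hx) (dR (sf₂ x hx))]
    exact wd_congr (ev' hint x hx)
  have E2 : ∀ x ∈ U, wdbar f₁ (g x) * conj (deriv g x) = deriv G (f₂ x) * wdbar f₂ x :=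
    fun x hx => by
      rw [← wdbar_comp_holo (dR (sf₁ x hx)) (dg x hx),
        ← wdbar_holo_comp (dG x hx) (dR (sf₂ x hx))]
      exact wdbar_congr (ev' hint x hx)
  have hμ : ∀ x ∈ U, μ₁ (g x) * conj (deriv g x) = μ₂ x * deriv g x := fun x hx => by
    have h1 := hf₁' _ (hgbij.mapsTo hx)
    have h2 := hf₂' x hx
    rw [hμ₁, hμ₂]
    simp only
    rw [div_mul_eq_mul_div, E2 x hx, div_mul_eq_mul_div, div_eq_div_iff h1 h2]
    linear_combination -(wdbar f₂ x) * E1 x hx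
  have sμ₁ : ContDiffAt ℝ ∞ μ₁ (g z) := by
    rw [hμ₁]
    simp only [div_eq_mul_inv]
    exact (contDiffAt_wdbar (sf₁ z hz)).mul
      ((contDiffAt_wd (sf₁ z hz)).inv (hf₁' _ (hgbij.mapsTo hz)))
  have sμ₂ : ContDiffAt ℝ ∞ μ₂ z := by
    rw [hμ₂]
    simp only [div_eq_mul_inv]
    exact (contDiffAt_wdbar (sf₂ z hz)).mul ((contDiffAt_wd (sf₂ z hz)).inv (hf₂' z hz))
  have dp : DifferentiableAt ℝ (wd f₂) z := dR (contDiffAt_wd (sf₂ z hz))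
  have dpp : DifferentiableAt ℝ (wd (wd f₂)) z := dR (contDiffAt_wd (contDiffAt_wd (sf₂ z hz)))
  have dpb : DifferentiableAt ℝ (wdbar (wd f₂)) z :=
    dR (contDiffAt_wdbar (contDiffAt_wd (sf₂ z hz)))
  have dP : DifferentiableAt ℝ (wd f₁) (g z) := dR (contDiffAt_wd (sf₁ z hz))
  have dg1R : DifferentiableAt ℝ (deriv g) z := (dg1 z hz).restrictScalars ℝ
  have dgR : DifferentiableAt ℝ g z := (dg z hz).restrictScalars ℝ
  have dconj : DifferentiableAt ℝ (fun x => conj (deriv g x)) z :=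
    (Complex.conjCLE : ℂ →L[ℝ] ℂ).differentiableAt.comp z dg1R
  have dGf : DifferentiableAt ℝ (fun x => deriv G (f₂ x)) z :=
    ((dG1 z hz).restrictScalars ℝ).comp z (dR (sf₂ z hz))
  -- logarithmic derivatives
  have dexp (w : ℂ) : DifferentiableAt ℂ Complex.exp w := Complex.differentiable_exp w
  have T1 : deriv g z * wd τ z = deriv (deriv g) z := by
    rw [← hτ z hz, ← wd_holo (dg1 z hz), ← wd_congr (ev hτ), wd_holo_comp (dexp _) (dτ z hz),
      Complex.deriv_exp]
  have T2 : wdbar τ z = 0 := by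
    have h : deriv g z * wdbar τ z = 0 := by
      rw [← hτ z hz, ← wdbar_holo (dg1 z hz), ← wdbar_congr (ev hτ),
        wdbar_holo_comp (dexp _) (dτ z hz), Complex.deriv_exp]
    exact (mul_eq_zero.mp h).resolve_left (hg' z hz)
  have S1 : deriv G (f₂ z) * wd σ z = deriv (deriv G) (f₂ z) * wd f₂ z := by
    rw [← wd_holo_comp (dG1 z hz) (dR (sf₂ z hz)), ← wd_congr (ev hσ),
      wd_holo_comp (dexp _) (dσ z hz), Complex.deriv_exp, hσ z hz]
  have S2 : deriv G (f₂ z) * wdbar σ z = deriv (deriv G) (f₂ z) * wdbar f₂ z := by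
    rw [← wdbar_holo_comp (dG1 z hz) (dR (sf₂ z hz)), ← wdbar_congr (ev hσ),
      wdbar_holo_comp (dexp _) (dσ z hz), Complex.deriv_exp, hσ z hz]
  have hq : ∀ x ∈ U, wdbar f₂ x = μ₂ x * wd f₂ x := fun x hx => by
    rw [hμ₂]
    exact (div_mul_cancel₀ _ (hf₂' x hx)).symm
  have p0 := hf₂' z hz
  have g0 := hg' z hz
  have G0 := hG' _ (hf₂maps hz)
  have c0 := cne z hz
  have S3 : wdbar σ z = μ₂ z * wd σ z := by
    apply mul_left_cancel₀ G0
    rw [S2, hq z hz]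
    linear_combination -(μ₂ z) * S1
  -- `∂̄∂f₂ = ∂(μ₂ ∂f₂)`
  have Q : wdbar (wd f₂) z = μ₂ z * wd (wd f₂) z + wd μ₂ z * wd f₂ z := by
    rw [← wd_wdbar_comm (sf₂ z hz), wd_congr (ev hq), wd_mul (dR sμ₂) dp]
  -- second-order chain rules at `g z`
  have E3 : wd f₁ (g z) * deriv (deriv g) z + wd (wd f₁) (g z) * deriv g z * deriv g z
      = deriv G (f₂ z) * wd (wd f₂) z + deriv (deriv G) (f₂ z) * wd f₂ z * wd f₂ z := by
    have h := wd_congr (ev E1)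
    rwa [wd_mul (u := fun x => wd f₁ (g x)) (dP.comp z dgR) dg1R, wd_mul dGf dp, wd_comp_holo dP (dg z hz),
      wd_holo_comp (dG1 z hz) (dR (sf₂ z hz)), wd_holo (dg1 z hz)] at h
  have E4 : wd μ₁ (g z) * deriv g z * conj (deriv g z)
      = μ₂ z * deriv (deriv g) z + wd μ₂ z * deriv g z := by
    have h := wd_congr (ev hμ)
    rwa [wd_mul (u := fun x => μ₁ (g x)) ((dR sμ₁).comp z dgR) dconj,
      wd_mul (dR sμ₂) dg1R, wd_comp_holo (dR sμ₁) (dg z hz),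
      wd_conj_holo (dg1 z hz), wd_holo (dg1 z hz), mul_zero, zero_add] at h
  -- `∂(∂̄p/p) = ∂̄(∂p/p)` for `p = ∂f₂`
  have L : wd (fun x => wdbar (wd f₂) x / wd f₂ x) z
      = wdbar (fun x => wd (wd f₂) x / wd f₂ x) z := by
    rw [wd_div dpb dp p0, wdbar_div dpp dp p0, wd_wdbar_comm (contDiffAt_wd (sf₂ z hz))]
    ring
  -- the differentials of the coefficients of `θ`
  have hol : DifferentiableAt ℂ (fun x => deriv (deriv g) x / deriv g x) z :=
    dg2.fun_div (dg1 z hz) g0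
  have da : deriv (fun x => deriv (deriv g) x / deriv g x) z
      = (deriv (deriv (deriv g)) z * deriv g z - deriv (deriv g) z * deriv (deriv g) z)
        / deriv g z ^ 2 := deriv_fun_div dg2 (dg1 z hz) g0
  have holR : DifferentiableAt ℝ (fun x => deriv (deriv g) x / deriv g x) z :=
    hol.restrictScalars ℝ
  have dst : DifferentiableAt ℝ (fun x => σ x + τ x) z := (dσ z hz).fun_add (dτ z hz)
  have dn : DifferentiableAt ℝ (fun x => wd (wd f₂) x / wd f₂ x) z := by
    simp only [div_eq_mul_inv]
    exact dpp.fun_mul (dp.fun_inv p0)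
  have dm : DifferentiableAt ℝ (fun x => wdbar (wd f₂) x / wd f₂ x) z := by
    simp only [div_eq_mul_inv]
    exact dpb.fun_mul (dp.fun_inv p0)
  have d2μ : DifferentiableAt ℝ (fun x => 2 * μ₂ x) z := (dR sμ₂).const_mul 2
  have w2μ : wd (fun x => 2 * μ₂ x) z = 2 * wd μ₂ z := by
    rw [wd_mul (differentiableAt_const _) (dR sμ₂), wd_holo (differentiableAt_const _)]
    simp
  have wB : wd B z = 2 * μ₂ z * deriv (fun x => deriv (deriv g) x / deriv g x) z
      + 2 * wd μ₂ z * (deriv (deriv g) z / deriv g z)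
      - ((σ z + τ z) * wd (fun x => wdbar (wd f₂) x / wd f₂ x) z
        + (wd σ z + wd τ z) * (wdbar (wd f₂) z / wd f₂ z)) := by
    rw [hB, wd_sub (d2μ.fun_mul holR) (dst.fun_mul dm), wd_mul d2μ holR, wd_mul dst dm,
      wd_add (dσ z hz) (dτ z hz), wd_holo hol, w2μ]
  have wA : wdbar A z = -(σ z + τ z) * wdbar (fun x => wd (wd f₂) x / wd f₂ x) z
      - (wdbar σ z + wdbar τ z) * (wd (wd f₂) z / wd f₂ z)
      + wdbar σ z * (deriv (deriv g) z / deriv g z) := by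
    rw [hA, wdbar_add (dst.fun_neg.fun_mul dn) ((dσ z hz).fun_mul holR), wdbar_mul dst.fun_neg dn,
      wdbar_neg, wdbar_mul (dσ z hz) holR, wdbar_add (dσ z hz) (dτ z hz), wdbar_holo hol]
    ring
  -- `(∂²f₁/∂f₁) ∘ g · g' = n + ∂σ - a`
  have N : wd (wd f₁) (g z) / wd f₁ (g z) * deriv g z
      = wd (wd f₂) z / wd f₂ z + wd σ z - deriv (deriv g) z / deriv g z := by
    have hP : wd f₁ (g z) = deriv G (f₂ z) * wd f₂ z / deriv g z := by
      rw [eq_div_iff g0, E1 z hz]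
    rw [← S1, hP] at E3
    rw [hP]
    field_simp
    field_simp at E3
    linear_combination E3
  -- `∂μ₁ ∘ g · conj g' = ∂μ₂ + μ₂ a`
  have M : wd μ₁ (g z) * conj (deriv g z)
      = wd μ₂ z + μ₂ z * (deriv (deriv g) z / deriv g z) := by
    field_simp
    linear_combination E4
  have W1 : ω₁ (g z) * deriv g z * conj (deriv g z)
      = (wd (wd f₂) z / wd f₂ z + wd σ z - deriv (deriv g) z / deriv g z)
        * (wd μ₂ z + μ₂ z * (deriv (deriv g) z / deriv g z))
        + 2 * μ₂ z * (h₁ (g z) * deriv g z ^ 2) := by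
    rw [← N, ← M, hω₁]
    simp only
    linear_combination 2 * h₁ (g z) * deriv g z * hμ z hz
  have Tτ : wd τ z = deriv (deriv g) z / deriv g z := by
    rw [eq_div_iff g0, ← T1, mul_comm]
  rw [W1, wB, wA, L, T2, S3, Tτ, da, hω₂, Q]
  simp only
  rw [hh₂ z hz, schwarzD]
  field_simp
  ring
end
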